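/- There exist a finite type S, a Markov kernel P assigning to each s ∈ S a probability mass function P(·|s) on S, a reward function r : S → ℝ, a discount γ ∈ [0,1), a non-constant function V_tar : S → ℝ, a state x ∈ S, and a finite set 𝒱 of functions S → ℝ containing the Bellman backup [T V_tar] (where [T V_tar](s) = r(s) + γ·∑_{s'} P(s'|s)·V_tar(s')), such that no minimizer over 𝒱 of the expected one-step MuZero surrogate loss V̂ ↦ E[(V̂(X) − (r(Y) + γ·V_tar(Y')))²] equals [T V_tar], where X and Y are independent samples from P(·|x) and Y' is a sample from P(·|Y). That is, the MuZero value-learning surrogate loss with model rollout depth m = 1 and bootstrap depth b = 1 is minimum-uncalibrated for value function learning even when the model equals the true transition kernel. -/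

import Mathlib

open Finset

/-- `IsPMF μ` says `μ` is a probability mass function on the finite type `S`. -/
def IsPMF {S : Type*} [Fintype S] (μ : S → ℝ) : Prop :=
  (∀ s, 0 ≤ μ s) ∧ ∑ s, μ s = 1

/-- The Bellman backup `[T V_tar](s) = r(s) + γ·∑_{s'} P(s'|s)·V_tar(s')`. -/
noncomputable def bellmanBackup {S : Type*} [Fintype S] (P : S → S → ℝ) (r : S → ℝ)
    (γ : ℝ) (Vtar : S → ℝ) : S → ℝ :=
  fun s => r s + γ * ∑ s', P s s' * Vtar s'

/-- Expected one-step MuZero surrogate loss at state `x` of candidate `Vhat` against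
target `Vtar`: `E[(Vhat(X) − (r(Y) + γ·Vtar(Y')))²]` with `X ∼ P(·|x)`, `Y ∼ P(·|x)`
independent of `X`, and `Y' ∼ P(·|Y)`. -/
noncomputable def muZeroLoss {S : Type*} [Fintype S] (P : S → S → ℝ) (r : S → ℝ)
    (γ : ℝ) (Vtar : S → ℝ) (x : S) (Vhat : S → ℝ) : ℝ :=
  ∑ a, ∑ b, ∑ c, P x a * P x b * P b c * (Vhat a - (r b + γ * Vtar c)) ^ 2

/-- Body of the uncalibratedness statement: `P` is a Markov kernel, `γ ∈ [0,1)`,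
`Vtar` is non-constant, `𝒱` contains the Bellman backup `[T Vtar]`, yet no minimizer of
the expected one-step MuZero surrogate loss over `𝒱` equals `[T Vtar]`. -/
def MuZeroUncalibratedBody (S : Type) [Fintype S] (P : S → S → ℝ) (r : S → ℝ)
    (γ : ℝ) (Vtar : S → ℝ) (x : S) (V : Finset (S → ℝ)) : Prop :=
  (∀ s, IsPMF (P s)) ∧ 0 ≤ γ ∧ γ < 1 ∧ (∃ s t : S, Vtar s ≠ Vtar t) ∧
  bellmanBackup P r γ Vtar ∈ V ∧
  ∀ Vhat ∈ V,
    (∀ V' ∈ V, muZeroLoss P r γ Vtar x Vhat ≤ muZeroLoss P r γ Vtar x V') →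
    Vhat ≠ bellmanBackup P r γ Vtar

/-!
The rollout state `X` is independent of the bootstrapped target `r(Y) + γ·Vtar(Y')`, so the loss
splits as `E[(Vhat(X) − m)²]` plus the variance of the target, where `m` is the mean of the target,
equivalently of the backup at the next state. The loss thus rewards predicting the constant `m`, and
the Bellman backup loses to that constant as soon as it takes two values on the support of
`P(·|x)`.
-/

theorem sum_mul_sub_sq_eq_sub_mean_sq_add {ι R : Type*} [CommRing R] (s : Finset ι)
    (w y : ι → R) (hw : ∑ i ∈ s, w i = 1) (c : R) :
    ∑ i ∈ s, w i * (c - y i) ^ 2 =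
      (c - ∑ j ∈ s, w j * y j) ^ 2 + ∑ i ∈ s, w i * (∑ j ∈ s, w j * y j - y i) ^ 2 := by
  set m := ∑ j ∈ s, w j * y j with hm
  have cross_term : ∑ i ∈ s, w i * (m - y i) = 0 := by
    simp only [mul_sub, sum_sub_distrib, ← sum_mul, hw, one_mul, ← hm, sub_self]
  calc ∑ i ∈ s, w i * (c - y i) ^ 2
      = ∑ i ∈ s, (w i * (c - m) ^ 2 + 2 * (c - m) * (w i * (m - y i)) + w i * (m - y i) ^ 2) :=
        sum_congr rfl fun i _ => by ring
    _ = (c - m) ^ 2 + ∑ i ∈ s, w i * (m - y i) ^ 2 := by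
        simp only [sum_add_distrib, ← sum_mul, ← mul_sum, hw, cross_term, one_mul, mul_zero,
          add_zero]

section Loss

variable {S : Type*} [Fintype S] {P : S → S → ℝ}

/-- The mean `E[(T Vtar)(Y)]`, `Y ∼ P(·|x)`, of the Bellman backup at the next state. -/
noncomputable def expectedBackup (P : S → S → ℝ) (r : S → ℝ) (γ : ℝ) (Vtar : S → ℝ) (x : S) : ℝ :=
  ∑ b, P x b * bellmanBackup P r γ Vtar b

/-- The variance of the bootstrapped target `r(Y) + γ·Vtar(Y')`, with `Y ∼ P(·|x)` and
`Y' ∼ P(·|Y)`: the part of the loss that no candidate value function can influence. It is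
centred at `expectedBackup`, the mean of the target by `sum_mul_target_eq_expectedBackup`. -/
noncomputable def targetVariance (P : S → S → ℝ) (r : S → ℝ) (γ : ℝ) (Vtar : S → ℝ) (x : S) : ℝ :=
  ∑ b, ∑ c, P x b * P b c * (expectedBackup P r γ Vtar x - (r b + γ * Vtar c)) ^ 2

theorem sum_mul_target_eq_expectedBackup (hP : ∀ s, ∑ s', P s s' = 1) (r : S → ℝ) (γ : ℝ)
    (Vtar : S → ℝ) (x : S) :
    ∑ b, ∑ c, P x b * P b c * (r b + γ * Vtar c) = expectedBackup P r γ Vtar x := by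
  refine sum_congr rfl fun b _ => ?_
  calc ∑ c, P x b * P b c * (r b + γ * Vtar c)
      = ∑ c, (P b c * (P x b * r b) + P x b * (γ * (P b c * Vtar c))) :=
        sum_congr rfl fun c _ => by ring
    _ = P x b * bellmanBackup P r γ Vtar b := by
        simp only [sum_add_distrib, ← sum_mul, ← mul_sum, hP, one_mul, bellmanBackup, mul_add]

theorem sum_mul_sub_target_sq_eq_add_targetVariance (hP : ∀ s, ∑ s', P s s' = 1) (r : S → ℝ)
    (γ : ℝ) (Vtar : S → ℝ) (x : S) (v : ℝ) :
    ∑ b, ∑ c, P x b * P b c * (v - (r b + γ * Vtar c)) ^ 2 =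
      (v - expectedBackup P r γ Vtar x) ^ 2 + targetVariance P r γ Vtar x := by
  have joint_mass : ∑ p : S × S, P x p.1 * P p.1 p.2 = 1 := by
    simp only [Fintype.sum_prod_type, ← mul_sum, hP, mul_one]
  simpa only [Fintype.sum_prod_type, sum_mul_target_eq_expectedBackup hP, targetVariance] using
    sum_mul_sub_sq_eq_sub_mean_sq_add univ (fun p : S × S => P x p.1 * P p.1 p.2)
      (fun p => r p.1 + γ * Vtar p.2) joint_mass v

theorem muZeroLoss_eq_sum_add_targetVariance (hP : ∀ s, ∑ s', P s s' = 1) (r : S → ℝ) (γ : ℝ)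
    (Vtar : S → ℝ) (x : S) (Vhat : S → ℝ) :
    muZeroLoss P r γ Vtar x Vhat =
      ∑ a, P x a * (Vhat a - expectedBackup P r γ Vtar x) ^ 2 + targetVariance P r γ Vtar x :=
  calc muZeroLoss P r γ Vtar x Vhat
      = ∑ a, P x a * ∑ b, ∑ c, P x b * P b c * (Vhat a - (r b + γ * Vtar c)) ^ 2 := by
        simp only [muZeroLoss, mul_sum, mul_assoc]
    _ = ∑ a, P x a * (Vhat a - expectedBackup P r γ Vtar x) ^ 2 + targetVariance P r γ Vtar x := by
        simp only [sum_mul_sub_target_sq_eq_add_targetVariance hP, mul_add, sum_add_distrib,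
          ← sum_mul, hP, one_mul]

theorem muZeroLoss_const_expectedBackup_lt (hP : ∀ s, IsPMF (P s)) {r : S → ℝ} {γ : ℝ}
    {Vtar Vhat : S → ℝ} {x s : S} (hs : P x s ≠ 0) (hVhat : Vhat s ≠ expectedBackup P r γ Vtar x) :
    muZeroLoss P r γ Vtar x (fun _ => expectedBackup P r γ Vtar x) <
      muZeroLoss P r γ Vtar x Vhat := by
  have spread_pos : 0 < ∑ a, P x a * (Vhat a - expectedBackup P r γ Vtar x) ^ 2 :=
    sum_pos' (fun a _ => mul_nonneg ((hP x).1 a) (sq_nonneg _))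
      ⟨s, mem_univ s, mul_pos (((hP x).1 s).lt_of_ne' hs) (sq_pos_of_ne_zero (sub_ne_zero.2 hVhat))⟩
  simpa [muZeroLoss_eq_sum_add_targetVariance fun s => (hP s).2] using spread_pos

end Loss

theorem muZero_value_loss_uncalibrated_general {S : Type} [Fintype S] {P : S → S → ℝ}
    {r : S → ℝ} {γ : ℝ} {Vtar : S → ℝ} {x : S} {V : Finset (S → ℝ)} (hP : ∀ s, IsPMF (P s))
    (hγ₀ : 0 ≤ γ) (hγ₁ : γ < 1) (hVtar : ∃ s t, Vtar s ≠ Vtar t)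
    (hsupp : ∃ s t, P x s ≠ 0 ∧ P x t ≠ 0 ∧
      bellmanBackup P r γ Vtar s ≠ bellmanBackup P r γ Vtar t)
    (hbackup : bellmanBackup P r γ Vtar ∈ V) (hmean : (fun _ => expectedBackup P r γ Vtar x) ∈ V) :
    MuZeroUncalibratedBody S P r γ Vtar x V := by
  refine ⟨hP, hγ₀, hγ₁, hVtar, hbackup, ?_⟩
  rintro _ - hmin rfl
  obtain ⟨s, hs, hne⟩ :
      ∃ s, P x s ≠ 0 ∧ bellmanBackup P r γ Vtar s ≠ expectedBackup P r γ Vtar x := by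
    obtain ⟨s, t, hs, ht, hst⟩ := hsupp
    by_contra! hconst
    exact hst ((hconst s hs).trans (hconst t ht).symm)
  exact (muZeroLoss_const_expectedBackup_lt hP hs hne).not_ge (hmin _ hmean)

/-- The MuZero value-learning surrogate loss with `m = 1` and `b = 1` is
minimum-uncalibrated for value function learning even when the model is the true
transition kernel. -/
theorem muZero_value_loss_uncalibrated :
    ∃ (S : Type) (inst : Fintype S) (P : S → S → ℝ) (r : S → ℝ) (γ : ℝ)
      (Vtar : S → ℝ) (x : S) (V : Finset (S → ℝ)),
      @MuZeroUncalibratedBody S inst P r γ Vtar x V := by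
  classical
  let P : Bool → Bool → ℝ := fun _ _ => 1 / 2
  let r : Bool → ℝ := fun s => if s then 1 else 0
  refine ⟨Bool, inferInstance, P, r, 1 / 2, r, true,
    {bellmanBackup P r (1 / 2) r, fun _ => expectedBackup P r (1 / 2) r true}, ?_⟩
  have hP (s : Bool) : IsPMF (P s) := ⟨fun _ => by norm_num [P], by norm_num [P]⟩
  have hbackup : bellmanBackup P r (1 / 2) r true ≠ bellmanBackup P r (1 / 2) r false := by
    simp [bellmanBackup, P, r]
  exact muZero_value_loss_uncalibrated_general hP (by norm_num) (by norm_num)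
    ⟨true, false, by simp [r]⟩ ⟨true, false, by simp [P], by simp [P], hbackup⟩ (by simp) (by simp)
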